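/- Let K be a star body in ℝⁿ, φ : (0,∞) → (0,∞) convex and strictly decreasing, and 0 ≤ i < n. Then (1/n)∫_{S^{n-1}} φ(1/ρ(K,u)) ρ(K,u)^{n-i} dS(u) ≥ W̃ᵢ(K) · φ( (V(B)/W̃ᵢ(K))^{1/(n-i)} ), where B is the unit ball and V(B) = W̃ᵢ(B) is its volume. If φ is strictly convex, equality holds if and only if K is a ball centered at the origin. -/

import Mathlib

open MeasureTheory Metric Set Real

/-- The surface (spherical) measure on the unit sphere `S^{n-1} ⊆ ℝⁿ`. -/
noncomputable def sphereσ (n : ℕ) : Measure (sphere (0 : EuclideanSpace ℝ (Fin n)) 1) :=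
  μH[(n : ℝ) - 1]

open Module in
lemma aux_chart (n : ℕ) (x : sphere (0 : EuclideanSpace ℝ (Fin n)) 1) :
    ∃ F : Submodule ℝ (EuclideanSpace ℝ (Fin n)), (finrank ℝ F : ℝ) = (n : ℝ) - 1 ∧
      ∃ e : OpenPartialHomeomorph (sphere (0 : EuclideanSpace ℝ (Fin n)) 1) F,
        x ∈ e.source ∧
        (∃ C : NNReal, ∃ t ∈ nhds x, LipschitzOnWith C e t) ∧
        (∃ C : NNReal, ∃ t ∈ nhds (e x), LipschitzOnWith C e.symm t) := by
  have hx1 : ‖(x : EuclideanSpace ℝ (Fin n))‖ = 1 := by simp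
  have hv : ‖-(x : EuclideanSpace ℝ (Fin n))‖ = 1 := by simp
  have hx0 : -(x : EuclideanSpace ℝ (Fin n)) ≠ 0 := by
    intro h; rw [h] at hv; simp at hv
  refine ⟨(ℝ ∙ (-(x : EuclideanSpace ℝ (Fin n))))ᗮ, ?_, stereographic hv, ?_, ?_, ?_⟩
  · have h1 := Submodule.finrank_add_finrank_orthogonal (ℝ ∙ (-(x : EuclideanSpace ℝ (Fin n))))
    rw [finrank_span_singleton hx0, finrank_euclideanSpace_fin] at h1
    have h2 := congrArg (Nat.cast : ℕ → ℝ) h1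
    push_cast at h2
    linarith
  · rw [stereographic_source]
    intro h
    have h2 : (x : EuclideanSpace ℝ (Fin n)) = -x := congrArg Subtype.val (mem_singleton_iff.1 h)
    have h3 : (x : EuclideanSpace ℝ (Fin n)) = 0 := by
      have h4 : (2 : ℝ) • (x : EuclideanSpace ℝ (Fin n)) = 0 := by
        rw [two_smul]; nth_rewrite 2 [h2]; exact add_neg_cancel _
      exact (smul_eq_zero.1 h4).resolve_left two_ne_zero
    rw [h3] at hx1; simp at hx1
  · have hopen : IsOpen {y : EuclideanSpace ℝ (Fin n) |
        innerSL ℝ (-(x : EuclideanSpace ℝ (Fin n))) y ≠ (1 : ℝ)} :=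
      isOpen_ne_fun (by fun_prop) continuous_const
    have hmem : (x : EuclideanSpace ℝ (Fin n)) ∈ {y : EuclideanSpace ℝ (Fin n) |
        innerSL ℝ (-(x : EuclideanSpace ℝ (Fin n))) y ≠ (1 : ℝ)} := by
      simp only [mem_ofPred_eq, innerSL_apply_apply, inner_neg_left, real_inner_self_eq_norm_sq, hx1]
      norm_num
    obtain ⟨C, t, ht, hL⟩ := ((contDiffOn_stereoToFun (n := 1)).contDiffAt
      (hopen.mem_nhds hmem)).exists_lipschitzOnWith
    refine ⟨C, Subtype.val ⁻¹' t, continuous_subtype_val.continuousAt.preimage_mem_nhds ht, ?_⟩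
    intro a ha b hb
    exact hL ha hb
  · have hc : ContDiff ℝ 1 (fun w : (ℝ ∙ (-(x : EuclideanSpace ℝ (Fin n))))ᗮ =>
        stereoInvFunAux (-(x : EuclideanSpace ℝ (Fin n))) (w : EuclideanSpace ℝ (Fin n))) :=
      contDiff_stereoInvFunAux.comp (Submodule.subtypeL (ℝ ∙ (-(x : EuclideanSpace ℝ (Fin n))))ᗮ).contDiff
    obtain ⟨C, t, ht, hL⟩ := (hc.contDiffAt (x := stereographic hv x)).exists_lipschitzOnWith
    exact ⟨C, t, ht, fun a ha b hb => hL ha hb⟩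

lemma aux_finite (n : ℕ) : IsFiniteMeasure (sphereσ n) := by
  have : IsLocallyFiniteMeasure (sphereσ n) := by
    refine ⟨fun x => ?_⟩
    obtain ⟨F, hF, e, hx, -, C, t, ht, hL⟩ := aux_chart n x
    have hd : 0 ≤ (n : ℝ) - 1 := by rw [← hF]; positivity
    obtain ⟨s, hs, hsfin⟩ := (μH[(Module.finrank ℝ F : ℝ)] : Measure F).finiteAt_nhds (e x)
    refine ⟨e.symm '' (t ∩ s), ?_, ?_⟩
    · have h1 := e.symm.image_mem_nhds (e.map_source hx) (Filter.inter_mem ht hs)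
      rwa [e.left_inv hx] at h1
    · have h1 := (hL.mono inter_subset_left).hausdorffMeasure_image_le (s := t ∩ s) hd
      refine lt_of_le_of_lt h1 (ENNReal.mul_lt_top (by finiteness) ?_)
      rw [← hF]
      exact lt_of_le_of_lt (measure_mono inter_subset_right) hsfin
  infer_instance

lemma aux_openPos (n : ℕ) : (sphereσ n).IsOpenPosMeasure := by
  refine ⟨fun U hU ⟨x, hxU⟩ h0 => ?_⟩
  obtain ⟨F, hF, e, hx, ⟨C, t, ht, hL⟩, -⟩ := aux_chart n x
  have hd : 0 ≤ (n : ℝ) - 1 := by rw [← hF]; positivity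
  have h1 := (hL.mono inter_subset_left).hausdorffMeasure_image_le (s := t ∩ U) hd
  have h2 : (μH[(n : ℝ) - 1] : Measure (sphere (0 : EuclideanSpace ℝ (Fin n)) 1)) (t ∩ U) = 0 :=
    measure_mono_null inter_subset_right h0
  rw [h2, mul_zero, ← hF] at h1
  have h3 := e.image_mem_nhds hx (Filter.inter_mem ht (hU.mem_nhds hxU))
  exact (Measure.measure_pos_of_mem_nhds _ h3).ne' (le_antisymm h1 bot_le)

lemma aux_support (φ : ℝ → ℝ) (hφconv : ConvexOn ℝ (Ioi 0) φ) (hφanti : StrictAntiOn φ (Ioi 0))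
    (a : ℝ) (ha : 0 < a) :
    ∃ s : ℝ, s ≤ 0 ∧ ∀ t, 0 < t → φ a + s * (t - a) ≤ φ t := by
  have hai : a ∈ interior (Ioi (0 : ℝ)) := by simpa using ha
  have key : ∀ t, 0 < t → φ a + derivWithin φ (Ioi a) a * (t - a) ≤ φ t := by
    intro t ht
    rcases lt_trichotomy t a with h | h | h
    · have h1 := hφconv.slope_le_leftDeriv_of_mem_interior (mem_Ioi.2 ht) hai h
      have h2 := h1.trans (hφconv.leftDeriv_le_rightDeriv_of_mem_interior hai)
      rw [slope_def_field, div_le_iff₀ (by linarith)] at h2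
      linarith
    · simp [h]
    · have h2 := hφconv.rightDeriv_le_slope_of_mem_interior hai (mem_Ioi.2 ht) h
      rw [slope_def_field, le_div_iff₀ (by linarith)] at h2
      linarith
  refine ⟨_, ?_, key⟩
  have h1 := key (a + 1) (by linarith)
  have h2 := hφanti (mem_Ioi.2 ha) (mem_Ioi.2 (by linarith : 0 < a + 1)) (by linarith)
  simp only [add_sub_cancel_left, mul_one] at h1
  linarith

lemma aux_support_strict (φ : ℝ → ℝ) (h : StrictConvexOn ℝ (Ioi 0) φ)
    (a s : ℝ) (ha : 0 < a) (hs : ∀ t, 0 < t → φ a + s * (t - a) ≤ φ t)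
    (t : ℝ) (ht : 0 < t) (hta : t ≠ a) : φ a + s * (t - a) < φ t := by
  refine lt_of_le_of_ne (hs t ht) fun heq => ?_
  have h1 := h.2 (mem_Ioi.2 ht) (mem_Ioi.2 ha) hta (by norm_num : (0 : ℝ) < 1 / 2)
    (by norm_num : (0 : ℝ) < 1 / 2) (by norm_num)
  simp only [smul_eq_mul] at h1
  have h2 := hs (1 / 2 * t + 1 / 2 * a) (by positivity)
  nlinarith

lemma aux_bern (m : ℕ) (hm : 0 < m) (a t : ℝ) (ha : 0 < a) (ht : 0 < t) :
    t - a ≤ (t ^ m - a ^ m) / (m * a ^ (m - 1)) := by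
  have hm' : (0 : ℝ) < m := by exact_mod_cast hm
  have h1 : 1 + m * (t / a - 1) ≤ (1 + (t / a - 1)) ^ m :=
    one_add_mul_le_pow (by have := div_pos ht ha; linarith) m
  rw [le_div_iff₀ (by positivity)]
  have h2 : (1 + (t / a - 1)) ^ m * a ^ m = t ^ m := by
    rw [← mul_pow]; congr 1; rw [add_sub_cancel, div_mul_cancel₀ _ ha.ne']
  have h3 : (1 + m * (t / a - 1)) * a ^ m ≤ t ^ m := by
    rw [← h2]; gcongr
  have h4 : a ^ m = a * a ^ (m - 1) := by
    rw [← pow_succ']; congr 1; omega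
  have h5 : (1 + m * (t / a - 1)) * a ^ m = a ^ m + (t - a) * (m * a ^ (m - 1)) := by
    rw [h4]; field_simp
  linarith

/-- The Orlicz dual isoperimetric inequality:
`W̃_{φ,i}(K,B) ≥ W̃ᵢ(K)·φ((V(B)/W̃ᵢ(K))^{1/(n-i)})` where `B` is the unit ball
(`ρ(B,·) ≡ 1`, so `V(B) = W̃ᵢ(B) = σ(S^{n-1})/n`); if `φ` is strictly convex,
equality holds iff `K` is a ball centered at the origin. -/
theorem orlicz_dual_isoperimetric
    (n i : ℕ) (hi : i < n)
    (φ : ℝ → ℝ)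
    (hφconv : ConvexOn ℝ (Ioi 0) φ)
    (hφanti : StrictAntiOn φ (Ioi 0))
    (hφpos : ∀ t ∈ Ioi (0 : ℝ), 0 < φ t)
    (ρK : sphere (0 : EuclideanSpace ℝ (Fin n)) 1 → ℝ)
    (hKc : Continuous ρK) (hKpos : ∀ u, 0 < ρK u)
    (WφB WK VB : ℝ)
    (hWφB : WφB = (1 / n) * ∫ u, φ (1 / ρK u) * (ρK u) ^ (n - i) ∂(sphereσ n))
    (hWK : WK = (1 / n) * ∫ u, (ρK u) ^ (n - i) ∂(sphereσ n))
    (hVB : VB = (1 / n) * ∫ _u, (1 : ℝ) ∂(sphereσ n)) :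
    WφB ≥ WK * φ ((VB / WK) ^ (((n : ℝ) - i)⁻¹)) ∧
      (StrictConvexOn ℝ (Ioi 0) φ →
        (WφB = WK * φ ((VB / WK) ^ (((n : ℝ) - i)⁻¹)) ↔
          ∃ c : ℝ, 0 < c ∧ ∀ u, ρK u = c)) := by
  have hfin := aux_finite n
  have hpos := aux_openPos n
  have hn : 0 < n := by omega
  have hnR : (0 : ℝ) < n := by exact_mod_cast hn
  obtain ⟨m, hm⟩ : ∃ m, m = n - i := ⟨_, rfl⟩
  have hm0 : 0 < m := by omega
  have hmR : (0 : ℝ) < m := by exact_mod_cast hm0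
  have hmc : (n : ℝ) - i = m := by rw [hm, Nat.cast_sub hi.le]
  rw [← hm] at hWφB hWK
  rw [hmc]
  have hne : Nonempty (sphere (0 : EuclideanSpace ℝ (Fin n)) 1) := by
    have : Nonempty (Fin n) := ⟨⟨0, hn⟩⟩
    exact (NormedSpace.sphere_nonempty.2 zero_le_one).to_subtype
  have hint : ∀ f : sphere (0 : EuclideanSpace ℝ (Fin n)) 1 → ℝ, Continuous f →
      Integrable f (sphereσ n) := fun f hf =>
    hf.integrable_of_hasCompactSupport (HasCompactSupport.of_compactSpace f)
  have hintpos : ∀ f : sphere (0 : EuclideanSpace ℝ (Fin n)) 1 → ℝ, Continuous f →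
      (∀ u, 0 < f u) → 0 < ∫ u, f u ∂(sphereσ n) := by
    intro f hf hfp
    refine lt_of_le_of_ne (integral_nonneg fun u => (hfp u).le) fun h0 => ?_
    have h1 := (integral_eq_zero_iff_of_nonneg (fun u => (hfp u).le) (hint f hf)).1 h0.symm
    have h2 := (hf.ae_eq_iff_eq (sphereσ n) continuous_const).1 h1
    obtain ⟨u⟩ := hne
    exact (hfp u).ne' (congrFun h2 u)
  have hρm : Continuous fun u => ρK u ^ m := hKc.pow m
  have hI : 0 < ∫ u, ρK u ^ m ∂(sphereσ n) := hintpos _ hρm fun u => pow_pos (hKpos u) m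
  have hJ : 0 < ∫ _u, (1 : ℝ) ∂(sphereσ n) := hintpos _ continuous_const fun u => one_pos
  have hφc : ContinuousOn φ (Ioi 0) := hφconv.continuousOn isOpen_Ioi
  have hinv : Continuous fun u => 1 / ρK u :=
    continuous_const.div hKc fun u => (hKpos u).ne'
  have hφρ : Continuous fun u => φ (1 / ρK u) * ρK u ^ m :=
    (hφc.comp_continuous hinv fun u => mem_Ioi.2 (one_div_pos.2 (hKpos u))).mul hρm
  have hq : VB / WK = (∫ _u, (1 : ℝ) ∂(sphereσ n)) / ∫ u, ρK u ^ m ∂(sphereσ n) := by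
    rw [hVB, hWK]; field_simp
  have hq0 : 0 < VB / WK := by rw [hq]; positivity
  set a : ℝ := (VB / WK) ^ ((m : ℝ)⁻¹) with ha_def
  have ha : 0 < a := rpow_pos_of_pos hq0 _
  have ham : a ^ m = VB / WK := Real.rpow_inv_natCast_pow hq0.le hm0.ne'
  obtain ⟨s, hs0, hs⟩ := aux_support φ hφconv hφanti a ha
  set r : ℝ := s / (m * a ^ (m - 1)) with hr
  -- pointwise lower bound
  have hpt : ∀ t, 0 < t → φ a + r * (t ^ m - a ^ m) ≤ φ a + s * (t - a) := by
    intro t ht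
    have h1 := mul_le_mul_of_nonpos_left (aux_bern m hm0 a t ha ht) hs0
    have h2 : s * ((t ^ m - a ^ m) / (m * a ^ (m - 1))) = r * (t ^ m - a ^ m) := by
      rw [hr]; ring
    linarith
  set g : sphere (0 : EuclideanSpace ℝ (Fin n)) 1 → ℝ := fun u =>
    φ (1 / ρK u) * ρK u ^ m - (φ a * ρK u ^ m + (r * 1 - r * a ^ m * ρK u ^ m)) with hg
  have hgeq : ∀ u, g u =
      (φ (1 / ρK u) - (φ a + r * ((1 / ρK u) ^ m - a ^ m))) * ρK u ^ m := by
    intro u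
    have h1 : (1 / ρK u) ^ m * ρK u ^ m = 1 := by
      rw [← mul_pow, one_div_mul_cancel (hKpos u).ne', one_pow]
    simp only [hg]
    linear_combination r * h1
  have hgc : Continuous g := by
    simp only [hg]
    exact hφρ.sub ((hρm.const_mul _).add (continuous_const.sub (hρm.const_mul _)))
  have hg0 : ∀ u, 0 ≤ g u := by
    intro u
    have hp := one_div_pos.2 (hKpos u)
    rw [hgeq]
    refine mul_nonneg ?_ (pow_pos (hKpos u) m).le
    linarith [hpt _ hp, hs _ hp]
  have hgint : ∫ u, g u ∂(sphereσ n) =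
      (∫ u, φ (1 / ρK u) * ρK u ^ m ∂(sphereσ n)) - φ a * ∫ u, ρK u ^ m ∂(sphereσ n) := by
    simp only [hg]
    have c1 : Continuous fun u => φ a * ρK u ^ m := hρm.const_mul _
    have c2 : Continuous fun u => r * a ^ m * ρK u ^ m := hρm.const_mul _
    have c3 : Continuous fun u => r * 1 - r * a ^ m * ρK u ^ m := continuous_const.sub c2
    have c4 : Continuous fun u => φ a * ρK u ^ m + (r * 1 - r * a ^ m * ρK u ^ m) := c1.add c3
    rw [integral_sub (hint _ hφρ) (hint _ c4), integral_add (hint _ c1) (hint _ c3),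
      integral_sub (hint _ continuous_const) (hint _ c2),
      integral_const_mul, integral_const_mul, integral_const_mul, ham, hq]
    field_simp
    ring
  have hdiff : WφB - WK * φ a = (1 / n) * ∫ u, g u ∂(sphereσ n) := by
    rw [hgint, hWφB, hWK]; ring
  refine ⟨?_, fun hstrict => ⟨fun heq => ?_, ?_⟩⟩
  · have h1 : 0 ≤ (1 / n) * ∫ u, g u ∂(sphereσ n) :=
      mul_nonneg (by positivity) (integral_nonneg hg0)
    linarith
  · have h0 : ∫ u, g u ∂(sphereσ n) = 0 := by
      rw [heq, sub_self] at hdiff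
      rcases mul_eq_zero.1 hdiff.symm with h | h
      · exact absurd h (by positivity)
      · exact h
    have h1 := (integral_eq_zero_iff_of_nonneg hg0 (hint g hgc)).1 h0
    have h2 := (hgc.ae_eq_iff_eq (sphereσ n) continuous_const).1 h1
    refine ⟨1 / a, one_div_pos.2 ha, fun u => ?_⟩
    by_contra hne'
    have hp := one_div_pos.2 (hKpos u)
    have hta : 1 / ρK u ≠ a := by
      rintro h
      rw [← h, one_div_one_div] at hne'
      exact hne' rfl
    have h3 := aux_support_strict φ hstrict a s ha hs _ hp hta
    have h4 : 0 < g u := by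
      rw [hgeq]
      refine mul_pos ?_ (pow_pos (hKpos u) m)
      linarith [hpt _ hp]
    exact h4.ne' (congrFun h2 u)
  · rintro ⟨c, hc, hcu⟩
    have hac : a = 1 / c := by
      have h1 : a ^ m = (1 / c) ^ m := by
        have h2 : ∫ u, ρK u ^ m ∂(sphereσ n) = c ^ m * ∫ _u, (1 : ℝ) ∂(sphereσ n) := by
          rw [← integral_const_mul]; simp only [hcu, mul_one]
        rw [ham, hq, h2, one_div_pow]
        field_simp
      exact (pow_left_inj₀ ha.le (one_div_pos.2 hc).le hm0.ne').1 h1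
    have h0 : ∀ u, g u = 0 := by
      intro u
      rw [hgeq, hcu, hac]; ring
    simp only [h0, integral_zero, mul_zero] at hdiff
    linarith
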